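/- For every j ∈ {1, …, m} the following two conditions are equivalent: (1) for every σ ∈ Σ_{ρ,α} and every t ∈ [0, 1], the probability measure (1 − t)σ + t δ_{p_j} belongs to Σ_{ρ,α}; (2) for every k ∈ ℕ and every subset ι ⊆ {1, …, m} with k + card(ι) ≥ 1 and 4π (k + Σ_{i ∈ ι} (1 + α_i)) < ρ, one also has 4π (k + Σ_{i ∈ ι ∪ {j}} (1 + α_i)) < ρ. -/

import Mathlib

open MeasureTheory Metric
open scoped NNReal ENNReal BigOperators Classical

variable {X : Type*}

/-- The weighted cardinality function `χ` (for `p` injective). -/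
noncomputable def chi {m : ℕ} (p : Fin m → X) (α : Fin m → ℝ) (q : X) : ℝ :=
  1 + ∑ j, if p j = q then α j else 0

/-- The space of formal barycenters `Σ_{ρ,α}`, as a set of (probability) measures. -/
noncomputable def BarM [MeasurableSpace X] {m : ℕ} (p : Fin m → X) (α : Fin m → ℝ)
    (ρ : ℝ) : Set (Measure X) :=
  {μ | ∃ (J : Finset X) (t : X → ℝ≥0),
    (∑ q ∈ J, t q) = 1 ∧
    4 * Real.pi * (∑ q ∈ J, chi p α q) < ρ ∧
    μ = ∑ q ∈ J, ((t q : ℝ≥0∞) • Measure.dirac q)}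

lemma chi_p_aux {m : ℕ} (p : Fin m → X) (hp : Function.Injective p) (α : Fin m → ℝ)
    (i : Fin m) : chi p α (p i) = 1 + α i := by
  unfold chi
  simp [hp.eq_iff]

lemma chi_off_aux {m : ℕ} (p : Fin m → X) (α : Fin m → ℝ) (q : X) (hq : q ∉ Set.range p) :
    chi p α q = 1 := by
  unfold chi
  rw [Finset.sum_eq_zero, add_zero]
  intro i _
  rw [if_neg]
  exact fun h => hq ⟨i, h⟩

lemma chi_nonneg_aux {m : ℕ} (p : Fin m → X) (hp : Function.Injective p) (α : Fin m → ℝ)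
    (hα : ∀ j, -1 < α j ∧ α j < 0) (q : X) : 0 ≤ chi p α q := by
  by_cases hq : q ∈ Set.range p
  · obtain ⟨i, rfl⟩ := hq
    rw [chi_p_aux p hp]
    linarith [(hα i).1]
  · rw [chi_off_aux p α q hq]
    norm_num

lemma sum_chi_aux {m : ℕ} (p : Fin m → X) (hp : Function.Injective p) (α : Fin m → ℝ)
    (S : Finset X) (hS : ∀ q ∈ S, q ∉ Set.range p) (ι : Finset (Fin m)) :
    ∑ q ∈ S ∪ ι.image p, chi p α q = (S.card : ℝ) + ∑ i ∈ ι, (1 + α i) := by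
  rw [Finset.sum_union, Finset.sum_image (fun a _ b _ h => hp h),
    Finset.sum_congr rfl (fun q hq => chi_off_aux p α q (hS q hq))]
  · simp [chi_p_aux p hp]
  · rw [Finset.disjoint_left]
    intro q hq hq'
    obtain ⟨i, _, rfl⟩ := Finset.mem_image.1 hq'
    exact hS _ hq ⟨i, rfl⟩

lemma decomp_aux {m : ℕ} (p : Fin m → X) (J : Finset X) :
    ∃ (S : Finset X) (ι : Finset (Fin m)), (∀ q ∈ S, q ∉ Set.range p) ∧
      J = S ∪ ι.image p := by
  refine ⟨J.filter (fun q => q ∉ Set.range p), Finset.univ.filter (fun i => p i ∈ J), ?_, ?_⟩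
  · intro q hq
    exact (Finset.mem_filter.1 hq).2
  · ext q
    simp only [Finset.mem_union, Finset.mem_filter, Finset.mem_image, Finset.mem_univ, true_and]
    constructor
    · intro h
      by_cases hq : q ∈ Set.range p
      · obtain ⟨i, rfl⟩ := hq
        exact Or.inr ⟨i, h, rfl⟩
      · exact Or.inl ⟨h, hq⟩
    · rintro (h | ⟨i, h, rfl⟩)
      · exact h.1
      · exact h

lemma insert_aux {m : ℕ} (p : Fin m → X) (S : Finset X) (ι : Finset (Fin m)) (j : Fin m) :
    insert (p j) (S ∪ ι.image p) = S ∪ (insert j ι).image p := by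
  rw [Finset.image_insert, Finset.union_insert]

/-- `p_j`-stability of `Σ_{ρ,α}` (convex stability towards `δ_{p_j}`) is
equivalent to the combinatorial condition on admissible pairs `(k, ι)`. -/
theorem pj_stable_iff
    [MetricSpace X] [CompactSpace X] [Infinite X] [MeasurableSpace X] [BorelSpace X]
    {m : ℕ} (hm : 1 ≤ m) (p : Fin m → X) (hp : Function.Injective p)
    (α : Fin m → ℝ) (hα : ∀ j, -1 < α j ∧ α j < 0) (hmono : Monotone α)
    (ρ : ℝ) (hρ : 0 < ρ) (j : Fin m) :
    (∀ μ ∈ BarM p α ρ, ∀ t : ℝ, 0 ≤ t → t ≤ 1 →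
      (ENNReal.ofReal (1 - t) • μ + ENNReal.ofReal t • Measure.dirac (p j)) ∈ BarM p α ρ)
    ↔
    (∀ (k : ℕ) (ι : Finset (Fin m)), 1 ≤ k + ι.card →
      4 * Real.pi * ((k : ℝ) + ∑ i ∈ ι, (1 + α i)) < ρ →
      4 * Real.pi * ((k : ℝ) + ∑ i ∈ insert j ι, (1 + α i)) < ρ) := by
  constructor
  · intro H k ι hk hlt
    obtain ⟨S, hS, hSc⟩ := (Set.finite_range p).infinite_compl.exists_subset_card_eq k
    have hS' : ∀ q ∈ S, q ∉ Set.range p := fun q hq => hS hq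
    have hJne : (S ∪ ι.image p).Nonempty := by
      rcases Nat.eq_zero_or_pos k with h0 | h0
      · have : 0 < ι.card := by omega
        obtain ⟨i, hi⟩ := Finset.card_pos.1 this
        exact ⟨p i, Finset.mem_union_right _ (Finset.mem_image_of_mem p hi)⟩
      · obtain ⟨q, hq⟩ := Finset.card_pos.1 (hSc ▸ h0)
        exact ⟨q, Finset.mem_union_left _ hq⟩
    have hins := sum_chi_aux p hp α S hS' (insert j ι)
    have hsum := sum_chi_aux p hp α S hS' ι
    rw [← insert_aux] at hins
    generalize S ∪ ι.image p = J at *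
    rw [hSc] at hins hsum
    have hc : (J.card : ℝ≥0) ≠ 0 := by
      exact_mod_cast (Finset.card_pos.2 hJne).ne'
    have hmem : (∑ q ∈ J, ((((J.card : ℝ≥0)⁻¹ : ℝ≥0) : ℝ≥0∞) • Measure.dirac q)) ∈
        BarM p α ρ := by
      refine ⟨J, fun _ => (J.card : ℝ≥0)⁻¹, ?_, ?_, rfl⟩
      · rw [Finset.sum_const, nsmul_eq_mul, mul_inv_cancel₀ hc]
      · rw [hsum]; exact hlt
    obtain ⟨J', s, -, hJ', heq⟩ := H _ hmem (1/2) (by norm_num) (by norm_num)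
    have hsub : insert (p j) J ⊆ J' := by
      intro q hq
      by_contra hq'
      have h1 := congrArg (fun μ : Measure X => μ {q}) heq
      have h2 : (∑ r ∈ J', ((s r : ℝ≥0∞) • Measure.dirac r) : Measure X) {q} = 0 := by
        rw [Measure.finset_sum_apply]
        apply Finset.sum_eq_zero
        intro r hr
        have : r ≠ q := fun h => hq' (h ▸ hr)
        simp [this]
      simp only [h2, Measure.add_apply, Measure.smul_apply, smul_eq_mul, add_eq_zero,
        mul_eq_zero, Measure.finset_sum_apply, Finset.sum_eq_zero_iff] at h1
      obtain ⟨h3, h4⟩ := h1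
      rcases Finset.mem_insert.1 hq with rfl | hqJ
      · rcases h4 with h4 | h4
        · rw [ENNReal.ofReal_eq_zero] at h4
          norm_num at h4
        · simp at h4
      · rcases h3 with h3 | h3
        · rw [ENNReal.ofReal_eq_zero] at h3
          norm_num at h3
        · rcases h3 q hqJ with h5 | h5
          · rw [ENNReal.coe_eq_zero] at h5
            exact inv_ne_zero hc h5
          · simp at h5
    have hle := Finset.sum_le_sum_of_subset_of_nonneg hsub
      (fun q _ _ => chi_nonneg_aux p hp α hα q)
    rw [hins] at hle
    have hpi := Real.pi_pos
    refine lt_of_le_of_lt ?_ hJ'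
    exact mul_le_mul_of_nonneg_left hle (by positivity)
  · rintro H μ ⟨J, s, hs, hJ, rfl⟩ t ht0 ht1
    have hJne : J.Nonempty := by
      rw [Finset.nonempty_iff_ne_empty]
      rintro rfl
      simp at hs
    have hins : 4 * Real.pi * (∑ q ∈ insert (p j) J, chi p α q) < ρ := by
      obtain ⟨S, ι, hS, rfl⟩ := decomp_aux p J
      rw [insert_aux, sum_chi_aux p hp α S hS]
      rw [sum_chi_aux p hp α S hS] at hJ
      refine H _ _ ?_ hJ
      have h1 := Finset.card_pos.2 hJne
      have h2 := Finset.card_union_le S (ι.image p)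
      have h3 := Finset.card_image_le (s := ι) (f := p)
      omega
    have hsubJ : J ⊆ insert (p j) J := Finset.subset_insert _ _
    have hfil : (insert (p j) J).filter (fun q => q ∈ J) = J := by
      ext q
      simp only [Finset.mem_filter, Finset.mem_insert]
      tauto
    refine ⟨insert (p j) J, fun q => (1 - t).toNNReal * (if q ∈ J then s q else 0) +
      t.toNNReal * (if q = p j then 1 else 0), ?_, hins, ?_⟩
    · rw [Finset.sum_add_distrib, ← Finset.mul_sum, ← Finset.mul_sum, ← Finset.sum_filter, hfil,
        hs, Finset.sum_ite_eq', if_pos (Finset.mem_insert_self _ _), mul_one, mul_one,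
        ← Real.toNNReal_add (by linarith) ht0]
      simp
    · have e1 : (∑ q ∈ J, ((s q : ℝ≥0∞) • Measure.dirac q) : Measure X) =
          ∑ q ∈ insert (p j) J, (if q ∈ J then ((s q : ℝ≥0∞) • Measure.dirac q) else 0) := by
        rw [← Finset.sum_filter, hfil]
      have e2 : (Measure.dirac (p j) : Measure X) =
          ∑ q ∈ insert (p j) J, (if q = p j then Measure.dirac q else 0) := by
        rw [Finset.sum_ite_eq', if_pos (Finset.mem_insert_self _ _)]
      rw [e1]
      conv_lhs => rw [e2]
      rw [Finset.smul_sum, Finset.smul_sum, ← Finset.sum_add_distrib]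
      refine Finset.sum_congr rfl fun q _ => ?_
      rw [ENNReal.coe_add, ENNReal.coe_mul, ENNReal.coe_mul, add_smul, mul_smul, mul_smul]
      congr 1
      · split_ifs <;> simp [ENNReal.ofReal]
      · split_ifs <;> simp [ENNReal.ofReal]
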